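/- If φ₁ over X₁ and φ₂ over X₂ are independent Boolean functions (X₁ ∩ X₂ = ∅), x ∈ X₁, and n₂ = |X₂|, then Banzhaf(φ₁ ∨ φ₂, x) = Banzhaf(φ₁, x) · (2^{n₂} − #φ₂). -/

import Mathlib

open Finset

variable {V : Type*} [DecidableEq V]

/-- Number of models of a Boolean function `φ` over variable set `X`:
subsets `Y ⊆ X` with `φ Y = true`. -/
def modelCount (X : Finset V) (φ : Finset V → Bool) : ℕ :=
  (X.powerset.filter fun Y => φ Y).card

/-- Banzhaf value of variable `x` in the Boolean function `φ` over variable set `X`. -/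
def banzhaf (X : Finset V) (φ : Finset V → Bool) (x : V) : ℤ :=
  ∑ Y ∈ (X \ {x}).powerset,
    ((if φ (insert x Y) then 1 else 0) - (if φ Y then 1 else 0) : ℤ)

/-!
A subset of `(X₁ \ {x}) ∪ X₂` is uniquely a union of some `A ⊆ X₁ \ {x}` and `B ⊆ X₂`. Adding `x` to
`A ∪ B` changes `φ₁ ∨ φ₂` exactly as adding `x` to `A` changes `φ₁` if `φ₂ B` is false, and not at
all otherwise. Hence the sum factors as the Banzhaf value of `φ₁` times the number of non-models of
`φ₂`.
-/

theorem union_inter_eq_left_of_disjoint {s t u : Finset V} (hs : s ⊆ u) (ht : Disjoint t u) :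
    (s ∪ t) ∩ u = s := by
  rw [Finset.union_inter_distrib_right, inter_eq_left.mpr hs, disjoint_iff_inter_eq_empty.mp ht,
    union_empty]

theorem union_inter_eq_right_of_disjoint {s t u : Finset V} (hs : Disjoint s u) (ht : t ⊆ u) :
    (s ∪ t) ∩ u = t := by
  rw [union_comm, union_inter_eq_left_of_disjoint ht hs]

theorem injOn_union_powerset_product {s t : Finset V} (h : Disjoint s t) :
    Set.InjOn (fun p : Finset V × Finset V => p.1 ∪ p.2) ↑(s.powerset ×ˢ t.powerset) := by
  refine Set.LeftInvOn.injOn (f₁' := fun Y => (Y ∩ s, Y ∩ t)) fun ⟨A, B⟩ hAB => ?_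
  obtain ⟨hA, hB⟩ : A ⊆ s ∧ B ⊆ t := by
    simpa only [mem_coe, mem_product, mem_powerset] using hAB
  exact Prod.ext (union_inter_eq_left_of_disjoint hA (h.symm.mono_left hB))
    (union_inter_eq_right_of_disjoint (h.mono_left hA) hB)

theorem sum_powerset_union_of_disjoint {M : Type*} [AddCommMonoid M] {s t : Finset V}
    (h : Disjoint s t) (f : Finset V → M) :
    ∑ Y ∈ (s ∪ t).powerset, f Y = ∑ A ∈ s.powerset, ∑ B ∈ t.powerset, f (A ∪ B) := by
  rw [powerset_union, ← sum_product']
  exact sum_image (injOn_union_powerset_product h)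

omit [DecidableEq V] in
theorem natCast_modelCount {R : Type*} [AddCommMonoidWithOne R] (X : Finset V)
    (φ : Finset V → Bool) :
    (modelCount X φ : R) = ∑ Y ∈ X.powerset, if φ Y then 1 else 0 :=
  (sum_boole _ _).symm

omit [DecidableEq V] in
theorem modelCount_add_modelCount_not (X : Finset V) (φ : Finset V → Bool) :
    modelCount X φ + modelCount X (fun Y => !φ Y) = 2 ^ #X := by
  simpa only [modelCount, Bool.not_eq_true', Bool.not_eq_true, card_powerset] using
    card_filter_add_card_filter_not (s := X.powerset) (fun Y => φ Y = true)

omit [DecidableEq V] in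
theorem natCast_modelCount_not {R : Type*} [Ring R] (X : Finset V) (φ : Finset V → Bool) :
    (modelCount X (fun Y => !φ Y) : R) = 2 ^ #X - modelCount X φ := by
  rw [eq_sub_iff_add_eq', ← Nat.cast_add, modelCount_add_modelCount_not, Nat.cast_pow,
    Nat.cast_ofNat]

/-- The marginal contribution of `x` to `Y` in `φ`, the summand of the Banzhaf value: `1` if adding
`x` turns `φ` from false to true, `-1` if it turns `φ` from true to false, and `0` otherwise. -/
def marginal (φ : Finset V → Bool) (x : V) (Y : Finset V) : ℤ :=
  (if φ (insert x Y) then 1 else 0) - (if φ Y then 1 else 0)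

theorem banzhaf_eq_sum_marginal (X : Finset V) (φ : Finset V → Bool) (x : V) :
    banzhaf X φ x = ∑ Y ∈ (X \ {x}).powerset, marginal φ x Y :=
  rfl

theorem marginal_or_union {X₁ X₂ A B : Finset V} {x : V} (h : Disjoint X₁ X₂) (hx : x ∈ X₁)
    (hA : A ⊆ X₁) (hB : B ⊆ X₂) (φ₁ φ₂ : Finset V → Bool) :
    marginal (fun Y => φ₁ (Y ∩ X₁) || φ₂ (Y ∩ X₂)) x (A ∪ B) =
      marginal φ₁ x A * if !φ₂ B then 1 else 0 := by
  have hxA : insert x A ⊆ X₁ := insert_subset hx hA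
  have hB₁ : Disjoint B X₁ := h.symm.mono_left hB
  rw [marginal, marginal, ← insert_union, union_inter_eq_left_of_disjoint hxA hB₁,
    union_inter_eq_left_of_disjoint hA hB₁,
    union_inter_eq_right_of_disjoint (h.mono_left hxA) hB,
    union_inter_eq_right_of_disjoint (h.mono_left hA) hB]
  cases φ₂ B <;> simp

/-- For independent φ₁ over X₁ and φ₂ over X₂ with x ∈ X₁:
Banzhaf(φ₁ ∨ φ₂, x) = Banzhaf(φ₁, x) · (2^{n₂} − #φ₂). -/
theorem banzhaf_or_independent (X₁ X₂ : Finset V) (φ₁ φ₂ : Finset V → Bool)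
    (x : V) (hx : x ∈ X₁) (h : Disjoint X₁ X₂) :
    banzhaf (X₁ ∪ X₂) (fun Y => φ₁ (Y ∩ X₁) || φ₂ (Y ∩ X₂)) x =
      banzhaf X₁ φ₁ x * (2 ^ X₂.card - (modelCount X₂ φ₂ : ℤ)) := by
  have hx₂ : x ∉ X₂ := disjoint_left.mp h hx
  have hvars : (X₁ ∪ X₂) \ {x} = (X₁ \ {x}) ∪ X₂ := by
    rw [union_sdiff_distrib, sdiff_singleton_eq_erase x X₂, erase_eq_of_notMem hx₂]
  calc
    _ = ∑ A ∈ (X₁ \ {x}).powerset, ∑ B ∈ X₂.powerset,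
          marginal (fun Y => φ₁ (Y ∩ X₁) || φ₂ (Y ∩ X₂)) x (A ∪ B) := by
      rw [banzhaf_eq_sum_marginal, hvars,
        sum_powerset_union_of_disjoint (h.mono_left sdiff_subset)]
    _ = ∑ A ∈ (X₁ \ {x}).powerset, ∑ B ∈ X₂.powerset,
          marginal φ₁ x A * if !φ₂ B then 1 else 0 :=
      sum_congr rfl fun A hA => sum_congr rfl fun B hB =>
        marginal_or_union h hx ((mem_powerset.mp hA).trans sdiff_subset) (mem_powerset.mp hB) φ₁ φ₂
    _ = banzhaf X₁ φ₁ x * modelCount X₂ (fun Z => !φ₂ Z) := by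
      rw [banzhaf_eq_sum_marginal, natCast_modelCount, sum_mul_sum]
    _ = banzhaf X₁ φ₁ x * (2 ^ X₂.card - (modelCount X₂ φ₂ : ℤ)) := by
      rw [natCast_modelCount_not]
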